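/- Let A = [a_1, ..., a_n] ∈ ℝ^{m×n} be nonzero and let (B, N) be the canonical partition of {1,...,n} (B ∪ N = {1,...,n}, B ∩ N = ∅, A_B x_B = 0 with x_B > 0 is feasible, and A_N^T y > 0, A_B^T y = 0 is feasible). If B = ∅, then φ(Ā) ≥ ρ_N(A) for the augmented matrix Ā := [A 0] ∈ ℝ^{m×(n+1)}, where ρ_N(A) := max_{z ∈ ℝ^m, ‖z‖₂=1} min_{i ∈ N} ⟨a_i, z⟩ (here L = {0}, so L^⊥ = ℝ^m). -/

import Mathlib

open scoped RealInnerProductSpace BigOperators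

/-- `comb a x = A x`, the combination `∑ i, x i • a i` of the columns `a i` of `A`. -/
noncomputable def comb {m n : ℕ} (a : Fin n → EuclideanSpace ℝ (Fin m)) (x : Fin n → ℝ) :
    EuclideanSpace ℝ (Fin m) := ∑ i, x i • a i

/-- `φ(A, x) = sup {λ > 0 : ∃ u v ∈ Δ_{n-1}, S(u) ⊆ S(x), Au - Av = (λ/‖Ax‖) Ax}`. -/
noncomputable def phiAt {m n : ℕ} (a : Fin n → EuclideanSpace ℝ (Fin m))
    (x : Fin n → ℝ) : ℝ :=
  sSup {lam : ℝ | 0 < lam ∧ ∃ u ∈ stdSimplex ℝ (Fin n), ∃ v ∈ stdSimplex ℝ (Fin n),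
    (∀ i, 0 < u i → 0 < x i) ∧
    comb a u - comb a v = (lam / ‖comb a x‖) • comb a x}

/-- The restricted width `φ(A) = min {φ(A, x) : x ≥ 0, Ax ≠ 0}`. -/
noncomputable def phi {m n : ℕ} (a : Fin n → EuclideanSpace ℝ (Fin m)) : ℝ :=
  sInf {t : ℝ | ∃ x : Fin n → ℝ, (∀ i, 0 ≤ x i) ∧ comb a x ≠ 0 ∧ t = phiAt a x}

/-!
Let `x ≥ 0` with `Ā x ≠ 0`. The weight of `x` on the zero column does not contribute to `Ā x`;
discarding it and dividing the rest by its sum `S` gives a point `u` of the simplex with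
`S(u) ⊆ S(x)` and `Ā u = Ā x / S`. Taking for `v` the vertex of the zero column, where `Ā v = 0`,
we get `φ(Ā, x) ≥ ‖Ā x‖ / S`. On the other hand `‖Ā x‖ ≥ ⟪Ā x, z⟫ ≥ S * min_i ⟪a i, z⟫` for every
`z` in the closed unit ball.
-/

lemma inv_sum_smul_mem_stdSimplex {𝕜 ι : Type*} [Field 𝕜] [LinearOrder 𝕜]
    [IsStrictOrderedRing 𝕜] [Fintype ι] {w : ι → 𝕜} (hw : ∀ i, 0 ≤ w i) (hS : ∑ i, w i ≠ 0) :
    (∑ i, w i)⁻¹ • w ∈ stdSimplex 𝕜 ι := by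
  refine ⟨fun i => mul_nonneg (inv_nonneg.mpr (Finset.sum_nonneg fun i _ => hw i)) (hw i), ?_⟩
  simp only [Pi.smul_apply, smul_eq_mul, ← Finset.mul_sum, inv_mul_cancel₀ hS]

section

variable {m n : ℕ} {a : Fin n → EuclideanSpace ℝ (Fin m)} {k : Fin n} {u v w x : Fin n → ℝ}
  {z : EuclideanSpace ℝ (Fin m)} {c : ℝ}

lemma comb_eq_linearCombination (a : Fin n → EuclideanSpace ℝ (Fin m)) (x : Fin n → ℝ) :
    comb a x = Fintype.linearCombination ℝ a x :=
  rfl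

lemma comb_smul (a : Fin n → EuclideanSpace ℝ (Fin m)) (c : ℝ) (x : Fin n → ℝ) :
    comb a (c • x) = c • comb a x := by
  simp only [comb_eq_linearCombination, map_smul]

lemma comb_single_one (a : Fin n → EuclideanSpace ℝ (Fin m)) (i : Fin n) :
    comb a (Pi.single i 1) = a i := by
  rw [comb_eq_linearCombination, Fintype.linearCombination_apply_single, one_smul]

lemma comb_update_zero (hk : a k = 0) (x : Fin n → ℝ) :
    comb a (Function.update x k 0) = comb a x :=
  Finset.sum_congr rfl fun i _ => by
    obtain rfl | hik := eq_or_ne i k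
    · simp only [hk, smul_zero]
    · rw [Function.update_of_ne hik]

lemma comb_mem_convexHull (hu : u ∈ stdSimplex ℝ (Fin n)) :
    comb a u ∈ convexHull ℝ (Set.range a) :=
  (convex_convexHull ℝ _).sum_mem (fun i _ => hu.1 i) hu.2
    fun i _ => subset_convexHull ℝ _ (Set.mem_range_self i)

lemma norm_comb_sub_comb_le_diam (hu : u ∈ stdSimplex ℝ (Fin n))
    (hv : v ∈ stdSimplex ℝ (Fin n)) : ‖comb a u - comb a v‖ ≤ Metric.diam (Set.range a) := by
  rw [← dist_eq_norm, ← convexHull_diam]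
  exact Metric.dist_le_diam_of_mem
    (isBounded_convexHull.mpr (Set.finite_range a).isBounded)
    (comb_mem_convexHull hu) (comb_mem_convexHull hv)

lemma le_phiAt (hc : 0 < c) (hx : comb a x ≠ 0) (hu : u ∈ stdSimplex ℝ (Fin n))
    (hv : v ∈ stdSimplex ℝ (Fin n)) (hux : ∀ i, 0 < u i → 0 < x i)
    (huv : comb a u - comb a v = (c / ‖comb a x‖) • comb a x) : c ≤ phiAt a x := by
  refine le_csSup ⟨Metric.diam (Set.range a), ?_⟩ ⟨hc, u, hu, v, hv, hux, huv⟩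
  rintro d ⟨hd, u', hu', v', hv', -, h⟩
  calc d = ‖(d / ‖comb a x‖) • comb a x‖ := by
        rw [norm_smul, Real.norm_of_nonneg (by positivity),
          div_mul_cancel₀ _ (norm_ne_zero_iff.mpr hx)]
    _ = ‖comb a u' - comb a v'‖ := by rw [h]
    _ ≤ Metric.diam (Set.range a) := norm_comb_sub_comb_le_diam hu' hv'

lemma le_phi (hA : ∃ i, a i ≠ 0)
    (h : ∀ x, (∀ i, 0 ≤ x i) → comb a x ≠ 0 → c ≤ phiAt a x) : c ≤ phi a := by
  obtain ⟨i, hi⟩ := hA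
  refine le_csInf ⟨_, Pi.single i 1, (single_mem_stdSimplex ℝ i).1, ?_, rfl⟩ ?_
  · rwa [comb_single_one]
  · rintro _ ⟨x, hx, hax, rfl⟩
    exact h x hx hax

lemma sum_pos_of_comb_ne_zero (hw : ∀ i, 0 ≤ w i) (h : comb a w ≠ 0) : 0 < ∑ i, w i := by
  refine Fintype.sum_pos (lt_of_le_of_ne hw ?_)
  rintro rfl
  exact h (by rw [comb_eq_linearCombination, map_zero])

lemma norm_comb_div_sum_le_phiAt (hk : a k = 0) (hw : ∀ i, 0 ≤ w i)
    (hwx : ∀ i, 0 < w i → 0 < x i) (hcomb : comb a w = comb a x) (hx : comb a x ≠ 0) :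
    ‖comb a x‖ / ∑ i, w i ≤ phiAt a x := by
  have hS : 0 < ∑ i, w i := sum_pos_of_comb_ne_zero hw (hcomb ▸ hx)
  have hnorm : 0 < ‖comb a x‖ := norm_pos_iff.mpr hx
  refine le_phiAt (div_pos hnorm hS) hx (inv_sum_smul_mem_stdSimplex hw hS.ne')
    (single_mem_stdSimplex ℝ k) (fun i hi => hwx i ?_) ?_
  · exact pos_of_mul_pos_right hi (inv_nonneg.mpr hS.le)
  · rw [comb_single_one, hk, sub_zero, comb_smul, hcomb, div_right_comm, div_self hnorm.ne',
      one_div]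

lemma mul_sum_le_norm_comb (hz : ‖z‖ ≤ 1) (hw : ∀ i, 0 ≤ w i)
    (hc : ∀ i, 0 < w i → c ≤ ⟪a i, z⟫) : c * ∑ i, w i ≤ ‖comb a w‖ := by
  have hterm (i : Fin n) : c * w i ≤ ⟪w i • a i, z⟫ := by
    rw [real_inner_smul_left, mul_comm]
    obtain hi | hi := (hw i).eq_or_lt
    · simp only [← hi, zero_mul, le_refl]
    · exact mul_le_mul_of_nonneg_left (hc i hi) hi.le
  calc c * ∑ i, w i = ∑ i, c * w i := Finset.mul_sum ..
    _ ≤ ∑ i, ⟪w i • a i, z⟫ := Finset.sum_le_sum fun i _ => hterm i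
    _ = ⟪comb a w, z⟫ := (sum_inner ..).symm
    _ ≤ ‖comb a w‖ * ‖z‖ := real_inner_le_norm _ _
    _ ≤ ‖comb a w‖ := mul_le_of_le_one_right (norm_nonneg _) hz

theorem le_phi_of_column_eq_zero (hk : a k = 0) (hA : ∃ i, a i ≠ 0) (hz : ‖z‖ ≤ 1)
    (hc : ∀ i, i ≠ k → c ≤ ⟪a i, z⟫) : c ≤ phi a := by
  refine le_phi hA fun x hx hax => ?_
  set w := Function.update x k 0
  have hw : ∀ i, 0 ≤ w i := le_update_iff.mpr ⟨le_rfl, fun i _ => hx i⟩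
  have hsupp : ∀ i, 0 < w i → i ≠ k ∧ 0 < x i := by
    intro i hi
    have hik : i ≠ k := by
      rintro rfl
      simp only [w, Function.update_self, lt_irrefl] at hi
    exact ⟨hik, by rwa [← Function.update_of_ne hik 0 x]⟩
  have hcomb : comb a w = comb a x := comb_update_zero hk x
  calc c ≤ ‖comb a x‖ / ∑ i, w i := by
        rw [le_div_iff₀ (sum_pos_of_comb_ne_zero hw (hcomb ▸ hax)), ← hcomb]
        exact mul_sum_le_norm_comb hz hw fun i hi => hc i (hsupp i hi).1
    _ ≤ phiAt a x := norm_comb_div_sum_le_phiAt hk hw (fun i hi => (hsupp i hi).2) hcomb hax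

end

theorem stmt16_general {m n : ℕ} {a : Fin n → EuclideanSpace ℝ (Fin m)} (hA : ∃ i, a i ≠ 0)
    {z : EuclideanSpace ℝ (Fin m)} (hz : ‖z‖ ≤ 1) :
    ⨅ i, ⟪a i, z⟫ ≤ phi (Fin.snoc a (0 : EuclideanSpace ℝ (Fin m))) := by
  obtain ⟨j, hj⟩ := hA
  refine le_phi_of_column_eq_zero (k := Fin.last n) (Fin.snoc_last ..)
    ⟨j.castSucc, by rwa [Fin.snoc_castSucc]⟩ hz fun i hi => ?_
  obtain ⟨i, rfl⟩ := Fin.exists_castSucc_eq.mpr hi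
  rw [Fin.snoc_castSucc]
  exact ciInf_le (Set.finite_range _).bddBelow i

/-- for the canonical partition `(B, N)` of a nonzero matrix `A`, if
`B = ∅` then `φ(Ā) ≥ ρ_N(A)` for the augmented matrix `Ā = [A 0]`, where
`ρ_N(A) = max_{‖z‖=1} min_{i ∈ N} ⟪a i, z⟫` (here `L = {0}`, so `L^⊥ = ℝ^m`). -/
theorem stmt16 (m n : ℕ) (hn : 0 < n) (a : Fin n → EuclideanSpace ℝ (Fin m))
    (hA : ∃ i, a i ≠ 0) (B N : Finset (Fin n))
    (hBN : B ∪ N = Finset.univ) (hdisj : B ∩ N = ∅)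
    (hB : ∃ xB : Fin n → ℝ, (∀ i ∈ B, 0 < xB i) ∧ ∑ i ∈ B, xB i • a i = 0)
    (hN : ∃ y : EuclideanSpace ℝ (Fin m),
      (∀ i ∈ N, 0 < ⟪a i, y⟫) ∧ ∀ i ∈ B, ⟪a i, y⟫ = 0)
    (hBempty : B = ∅) (ρN : ℝ)
    (hρN : IsGreatest
      {t : ℝ | ∃ z : EuclideanSpace ℝ (Fin m), ‖z‖ = 1 ∧
        t = sInf {s : ℝ | ∃ i ∈ N, s = ⟪a i, z⟫}} ρN) :
    ρN ≤ phi (Fin.snoc a (0 : EuclideanSpace ℝ (Fin m))) := by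
  obtain ⟨⟨z, hz, rfl⟩, -⟩ := hρN
  obtain rfl : N = Finset.univ := by rw [← hBN, hBempty, Finset.empty_union]
  simpa only [iInf, Set.range, Finset.mem_univ, true_and, eq_comm] using stmt16_general hA hz.le
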